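/- Let M be a finitely presented special monoid ⟨A ∣ w₁ = 1, …, w_k = 1⟩ with canonical projection π : FreeMonoid A →* M, and let N be the submonoid of M × Mᵒᵖ consisting of the pairs (u, v) with u * v = 1 in M. Let ≈ denote the weak N-orbit equivalence on M × M, i.e. the smallest equivalence relation with (m₁, m₂) ≈ (m₁ n₁, n₂ m₂) for all (m₁, m₂) ∈ M × M and (n₁, n₂) ∈ N. Let E = {(u, a, v) ∈ M × A × M : (u, π(a)·v) ≈ (u·π(a), v)} (the edges of the two-sided Cayley graph of M joining two vertices in the same weak N-orbit). Then: (i) E is closed under the action (m₁, m₂)·(u, a, v) = (m₁ u, a, v m₂) of M × Mᵒᵖ; and (ii) E is a finitely generated free left M × Mᵒᵖ-set: there is a finite subset C ⊆ E such that every element of E can be written in exactly one way as (m₁ c₁, a, c₂ m₂) with (c₁, a, c₂) ∈ C and (m₁, m₂) ∈ M × M. -/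

import Mathlib

/-!
Two facts about a special monoid `M = ⟨A ∣ w = 1, w ∈ W⟩` drive the argument.

* *Potential.* Give every edge of the two-sided Cayley graph a weight, zero on the translates of the
  edges read along a relator. The weight of a path spelling `l` then depends only on the value of
  `l` in `M`, and it vanishes along right-invertible words, so it induces a function on the vertices
  that is constant on weak orbits and increases by its weight along every edge. Hence an edge that
  stays in its weak orbit has weight zero: it is a translate of a relator edge.

* *Normal forms.* Replace factors whose value is a unit by shortlex-least words. Two overlapping
  unit factors `pq` and `qr` force `p`, `q` and `r` to be units, so this rewriting system is
  confluent and every element of `M` is the value of exactly one reduced word. A relator edge can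
  be pulled back to an edge `(x, a, y)` such that `x a y` is a unit and no shorter factor around `a`
  is one; by minimality, multiplying `x` on the left or `y` on the right by reduced words creates no
  new unit factor, so normal forms recover `x`, `y` and both multipliers.
-/

open FreeMonoid Relation

namespace SpecialMonoid

variable {A M : Type*} [Monoid M]

section FreeMonoid

theorem mul_eq_mul_iff_exists {p q s t : FreeMonoid A} :
    p * q = s * t ↔ (∃ k, s = p * k ∧ q = k * t) ∨ ∃ k, p = s * k ∧ t = k * q :=
  List.append_eq_append_iff

theorem finite_setOf_mul_of_mul_mem {W : Set (FreeMonoid A)} (hW : W.Finite) :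
    {o : FreeMonoid A × A × FreeMonoid A | o.1 * of o.2.1 * o.2.2 ∈ W}.Finite := by
  refine (hW.biUnion fun w _ => (List.finite_toSet w.toList.inits).prod
    ((List.finite_toSet w.toList).prod (List.finite_toSet w.toList.tails))).subset ?_
  rintro (o : FreeMonoid A × A × FreeMonoid A) ho
  refine Set.mem_biUnion ho ⟨?_, ?_, ?_⟩
  · exact (List.mem_inits _ _).2
      ⟨o.2.1 :: o.2.2.toList, (List.append_assoc o.1.toList [o.2.1] _).symm⟩
  · change o.2.1 ∈ (o.1 * of o.2.1 * o.2.2).toList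
    simp [toList_mul]
  · exact (List.mem_tails _ _).2 ⟨o.1.toList ++ [o.2.1], rfl⟩

theorem lex_append_right_of_length_eq {r : A → A → Prop} :
    ∀ {s₁ s₂ : List A}, s₁.length = s₂.length → List.Lex r s₁ s₂ →
      ∀ t, List.Lex r (s₁ ++ t) (s₂ ++ t)
  | [], [], _, h, _ => nomatch h
  | _ :: _, _ :: _, hlen, .cons h, t =>
    .cons (lex_append_right_of_length_eq (Nat.succ.inj hlen) h t)
  | _ :: _, _ :: _, _, .rel h, _ => .rel h

theorem shortlex_append_right {r : A → A → Prop} {s₁ s₂ : List A} (h : List.Shortlex r s₁ s₂)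
    (t : List A) : List.Shortlex r (s₁ ++ t) (s₂ ++ t) := by
  rw [List.shortlex_def] at h ⊢
  refine h.imp (fun hlt => by simpa using hlt) fun ⟨hlen, hlex⟩ => ⟨by simpa using hlen, ?_⟩
  exact lex_append_right_of_length_eq hlen hlex t

end FreeMonoid

section Units

theorem isUnit_of_isUnit_mul_of_isUnit_mul {a b c : M} (hab : IsUnit (a * b))
    (hbc : IsUnit (b * c)) : IsUnit b := by
  obtain ⟨r, hr⟩ := hbc.exists_right_inv
  obtain ⟨l, hl⟩ := hab.exists_left_inv
  exact isUnit_iff_exists_and_exists.2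
    ⟨⟨c * r, by rw [← mul_assoc, hr]⟩, ⟨l * a, by rw [mul_assoc, hl]⟩⟩

end Units

/-- The word map `π` exhibits `M` as the special monoid `⟨A ∣ w = 1, w ∈ W⟩`. -/
structure IsSpecialPresentation (π : FreeMonoid A →* M) (W : Set (FreeMonoid A)) : Prop where
  surjective : Function.Surjective π
  ker_eq : Con.ker π = conGen fun x y => x ∈ W ∧ y = 1

section Presentation

variable {π : FreeMonoid A →* M} {W : Set (FreeMonoid A)}

theorem IsSpecialPresentation.map_eq_one (hπ : IsSpecialPresentation π W) {w : FreeMonoid A}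
    (hw : w ∈ W) : π w = 1 := by
  have : Con.ker π w 1 := hπ.ker_eq ▸ .of _ _ ⟨hw, rfl⟩
  rwa [Con.ker_rel, map_one] at this

theorem IsSpecialPresentation.con_of_map_eq (hπ : IsSpecialPresentation π W)
    (c : Con (FreeMonoid A)) (hc : ∀ w ∈ W, c w 1) {x y : FreeMonoid A} (h : π x = π y) :
    c x y := by
  have hle : Con.ker π ≤ c := by
    rw [hπ.ker_eq, Con.conGen_le]
    rintro w _ ⟨hw, rfl⟩
    exact hc w hw
  exact hle h

theorem isSpecialPresentation_mk {rel : FreeMonoid A → FreeMonoid A → Prop}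
    (hrel : ∀ x y, rel x y ↔ x ∈ W ∧ y = 1) :
    IsSpecialPresentation (PresentedMonoid.mk rel) W where
  surjective := PresentedMonoid.surjective_mk
  ker_eq := by
    rw [show (fun x y => x ∈ W ∧ y = 1) = rel by ext; simp [hrel]]
    exact Con.ext fun _ _ => PresentedMonoid.mk_eq_mk_iff

end Presentation

section Edges

/-- The weak orbits of `M × M` under the right action of `{(u, v) ∈ M × Mᵐᵒᵖ | u * v = 1}`. -/
def WeakOrbit : M × M → M × M → Prop :=
  EqvGen fun x y => ∃ n₁ n₂, n₁ * n₂ = 1 ∧ y = (x.1 * n₁, n₂ * x.2)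

theorem eqvGen_eq_weakOrbit {N : Submonoid (M × Mᵐᵒᵖ)}
    (hN : ∀ p : M × Mᵐᵒᵖ, p ∈ N ↔ p.1 * p.2.unop = 1) :
    (EqvGen fun x y : M × M => ∃ n ∈ N, y = (x.1 * n.1, n.2.unop * x.2)) = WeakOrbit := by
  unfold WeakOrbit
  congr! 3
  constructor
  · rintro ⟨n, hn, h⟩
    exact ⟨n.1, n.2.unop, (hN n).1 hn, h⟩
  · rintro ⟨n₁, n₂, hn, h⟩
    exact ⟨(n₁, .op n₂), (hN _).2 hn, h⟩

theorem WeakOrbit.mul {x y : M × M} (h : WeakOrbit x y) (m₁ m₂ : M) :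
    WeakOrbit (m₁ * x.1, x.2 * m₂) (m₁ * y.1, y.2 * m₂) := by
  induction h with
  | rel x y h =>
    obtain ⟨n₁, n₂, hn, rfl⟩ := h
    exact .rel _ _ ⟨n₁, n₂, hn, by simp only [mul_assoc]⟩
  | refl x => exact .refl _
  | symm x y _ ih => exact ih.symm
  | trans x y z _ _ ih ih' => exact ih.trans _ _ _ ih'

theorem weakOrbit_of_isUnit {x b y : M} (h : IsUnit (x * b * y)) :
    WeakOrbit (x, b * y) (x * b, y) := by
  obtain ⟨g, hg⟩ := h
  have hinv : x * (b * (y * ↑g⁻¹)) = 1 := by simp only [← mul_assoc, ← hg, Units.mul_inv]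
  refine .trans _ (1, ↑g) _ (.symm _ _ (.rel _ _ ?_)) (.rel _ _ ?_)
  · exact ⟨x, b * (y * ↑g⁻¹), hinv, by simp [mul_assoc]⟩
  · exact ⟨x * b, y * ↑g⁻¹, by rw [mul_assoc, hinv], by simp [mul_assoc]⟩

/-- The left action of `M × Mᵐᵒᵖ` on the edges of the two-sided Cayley graph; the edge `(u, a, v)`
joins the vertices `(u, π(a) v)` and `(u π(a), v)`. The acting pair is written as an element of
`M × M`, its second component multiplying on the right. -/
def translate (m : M × M) (e : M × A × M) : M × A × M :=
  (m.1 * e.1, e.2.1, e.2.2 * m.2)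

@[simp]
theorem translate_one (e : M × A × M) : translate 1 e = e := by
  simp [translate]

theorem translate_translate (m n : M × M) (e : M × A × M) :
    translate m (translate n e) = translate (m.1 * n.1, n.2 * m.2) e := by
  simp [translate, mul_assoc]

/-- The edges of the two-sided Cayley graph that join two vertices of the same weak orbit. -/
def collapsedEdges (π : FreeMonoid A →* M) : Set (M × A × M) :=
  {e | WeakOrbit (e.1, π (of e.2.1) * e.2.2) (e.1 * π (of e.2.1), e.2.2)}

/-- The translates of the edges traversed by the paths that spell the relators in `W`. -/
def relatorEdges (π : FreeMonoid A →* M) (W : Set (FreeMonoid A)) : Set (M × A × M) :=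
  {e | ∃ m x a y, x * of a * y ∈ W ∧ e = translate m (π x, a, π y)}

variable {π : FreeMonoid A →* M}

theorem translate_mem_collapsedEdges (m : M × M) {e : M × A × M} (he : e ∈ collapsedEdges π) :
    translate m e ∈ collapsedEdges π := by
  simpa [collapsedEdges, translate, mul_assoc] using WeakOrbit.mul he m.1 m.2

theorem mem_collapsedEdges_of_isUnit {x y : FreeMonoid A} {a : A}
    (h : IsUnit (π (x * of a * y))) : (π x, a, π y) ∈ collapsedEdges π :=
  weakOrbit_of_isUnit (b := π (of a)) (by simpa using h)

end Edges

section Potential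

variable {π : FreeMonoid A →* M} {W : Set (FreeMonoid A)} {c : M × A × M → ℕ}

/-- The total weight of the edges on the path in the two-sided Cayley graph that spells `l`, from
the vertex `(p, π l * v)` to the vertex `(p * π l, v)`. Weights are natural numbers so that they
vanish as soon as their sum does. -/
def pathWeight (π : FreeMonoid A →* M) (c : M × A × M → ℕ) : M → FreeMonoid A → M → ℕ
  | _, [], _ => 0
  | p, a :: l, v => c (p, a, π l * v) + pathWeight π c (p * π (of a)) l v

@[simp]
theorem pathWeight_one (p v : M) : pathWeight π c p 1 v = 0 :=
  rfl

@[simp]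
theorem pathWeight_of_mul (p v : M) (a : A) (l : FreeMonoid A) :
    pathWeight π c p (of a * l) v = c (p, a, π l * v) + pathWeight π c (p * π (of a)) l v :=
  rfl

theorem pathWeight_mul (l l' : FreeMonoid A) (p v : M) :
    pathWeight π c p (l * l') v =
      pathWeight π c p l (π l' * v) + pathWeight π c (p * π l) l' v := by
  induction l using FreeMonoid.inductionOn' generalizing p with
  | one => simp
  | of_mul a l ih => simp only [mul_assoc, pathWeight_of_mul, ih, map_mul, add_assoc]

theorem pathWeight_eq_zero {l : FreeMonoid A} {p v : M}
    (h : ∀ x a y, l = x * of a * y → c (translate (p, v) (π x, a, π y)) = 0) :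
    pathWeight π c p l v = 0 := by
  induction l using FreeMonoid.inductionOn' generalizing p with
  | one => rfl
  | of_mul a l ih =>
    have head : c (p, a, π l * v) = 0 := by simpa [translate] using h 1 a l (by simp)
    have tail : pathWeight π c (p * π (of a)) l v = 0 := ih fun x b y hl => by
      simpa [translate, mul_assoc] using h (of a * x) b y (by simp [hl, mul_assoc])
    rw [pathWeight_of_mul, head, tail]

/-- The words with equal value in `M` whose paths have equal weight from every starting point. -/
def pathWeightCon (π : FreeMonoid A →* M) (c : M × A × M → ℕ) : Con (FreeMonoid A) where
  toSetoid := Setoid.ker fun l => (π l, fun p v => pathWeight π c p l v)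
  mul' {w x y z} hwx hyz := by
    simp only [Setoid.ker_def, Prod.mk.injEq, funext_iff] at hwx hyz ⊢
    simp [pathWeight_mul, hwx, hyz]

theorem pathWeight_congr (hπ : IsSpecialPresentation π W) (hc : ∀ e ∈ relatorEdges π W, c e = 0)
    {l l' : FreeMonoid A} (h : π l = π l') (p v : M) :
    pathWeight π c p l v = pathWeight π c p l' v := by
  have hcon : pathWeightCon π c l l' := hπ.con_of_map_eq _ (fun w hw => ?_) h
  · exact congrFun (congrFun (congrArg Prod.snd hcon) p) v
  · refine Prod.ext (by simp [hπ.map_eq_one hw]) (funext₂ fun p v => ?_)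
    exact pathWeight_eq_zero fun x a y hl => hc _ ⟨_, x, a, y, hl ▸ hw, rfl⟩

theorem pathWeight_eq_zero_of_map_mul_eq_one (hπ : IsSpecialPresentation π W)
    (hc : ∀ e ∈ relatorEdges π W, c e = 0) {l l' : FreeMonoid A} (h : π l * π l' = 1) (p v : M) :
    pathWeight π c p l (π l' * v) = 0 := by
  have hzero : pathWeight π c p (l * l') v = 0 :=
    pathWeight_congr (l' := 1) hπ hc (by simpa using h) p v
  rw [pathWeight_mul] at hzero
  exact Nat.eq_zero_of_add_eq_zero_right hzero

theorem pathWeight_eq_of_weakOrbit (hπ : IsSpecialPresentation π W)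
    (hc : ∀ e ∈ relatorEdges π W, c e = 0) {x y : M × M} (hxy : WeakOrbit x y)
    {l l' : FreeMonoid A} (hl : π l = x.1) (hl' : π l' = y.1) :
    pathWeight π c 1 l x.2 = pathWeight π c 1 l' y.2 := by
  induction hxy generalizing l l' with
  | rel x y hstep =>
    obtain ⟨n₁, n₂, hn, rfl⟩ := hstep
    obtain ⟨k₁, rfl⟩ := hπ.surjective n₁
    obtain ⟨k₂, rfl⟩ := hπ.surjective n₂
    calc pathWeight π c 1 l x.2
        = pathWeight π c 1 l (π k₁ * (π k₂ * x.2)) := by rw [← mul_assoc, hn, one_mul]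
      _ = pathWeight π c 1 (l * k₁) (π k₂ * x.2) := by
        rw [pathWeight_mul, pathWeight_eq_zero_of_map_mul_eq_one hπ hc hn, add_zero]
      _ = pathWeight π c 1 l' (π k₂ * x.2) := pathWeight_congr hπ hc (by simp [hl, hl']) _ _
  | refl x => exact pathWeight_congr hπ hc (hl.trans hl'.symm) _ _
  | symm x y _ ih => exact (ih hl' hl).symm
  | trans x y z _ _ ih ih' =>
    obtain ⟨k, hk⟩ := hπ.surjective y.1
    exact (ih hl hk).trans (ih' hk hl')

theorem weight_eq_zero_of_mem_collapsedEdges (hπ : IsSpecialPresentation π W)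
    (hc : ∀ e ∈ relatorEdges π W, c e = 0) {e : M × A × M} (he : e ∈ collapsedEdges π) :
    c e = 0 := by
  obtain ⟨u, a, v⟩ := e
  obtain ⟨l, rfl⟩ := hπ.surjective u
  have heq := pathWeight_eq_of_weakOrbit hπ hc he (l := l) (l' := l * of a) rfl (by simp)
  have hsplit : pathWeight π c 1 (l * of a) v =
      pathWeight π c 1 l (π (of a) * v) + c (π l, a, v) := by
    rw [pathWeight_mul, one_mul, ← mul_one (of a), pathWeight_of_mul]
    simp
  exact Nat.left_eq_add.1 (heq.trans hsplit)

theorem collapsedEdges_eq_relatorEdges (hπ : IsSpecialPresentation π W) :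
    collapsedEdges π = relatorEdges π W := by
  classical
  refine Set.Subset.antisymm (fun e he => ?_) ?_
  · simpa using weight_eq_zero_of_mem_collapsedEdges hπ
      (c := fun e => if e ∈ relatorEdges π W then 0 else 1) (fun _ he => if_pos he) he
  · rintro _ ⟨m, x, a, y, hw, rfl⟩
    have hu : IsUnit (π (x * of a * y)) := hπ.map_eq_one hw ▸ isUnit_one
    exact translate_mem_collapsedEdges m (mem_collapsedEdges_of_isUnit hu)

end Potential

section Reduced

variable {π : FreeMonoid A →* M} {W : Set (FreeMonoid A)} {nf : M → FreeMonoid A}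

/-- A word is reduced with respect to a choice `nf` of representatives if it contains, among the
factors whose value is a unit, only chosen representatives. -/
def IsReduced (π : FreeMonoid A →* M) (nf : M → FreeMonoid A) (p : FreeMonoid A) : Prop :=
  ∀ s q t, p = s * q * t → IsUnit (π q) → q = nf (π q)

theorem IsReduced.of_mul_right {s p : FreeMonoid A} (h : IsReduced π nf (s * p)) :
    IsReduced π nf p := by
  rintro s' q t rfl
  exact h (s * s') q t (by simp only [mul_assoc])

theorem IsReduced.of_mul_left {p t : FreeMonoid A} (h : IsReduced π nf (p * t)) :
    IsReduced π nf p := by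
  rintro s q t' rfl
  exact h s q (t' * t) (by simp only [mul_assoc])

theorem IsReduced.mul {p q : FreeMonoid A} (hp : IsReduced π nf p) (hq : IsReduced π nf q)
    (hpq : ∀ p₀ p₁ q₀ q₁, p = p₀ * p₁ → q = q₀ * q₁ → IsUnit (π (p₁ * q₀)) → p₁ = 1 ∨ q₀ = 1) :
    IsReduced π nf (p * q) := by
  intro s u t h hu
  rw [mul_assoc] at h
  rcases mul_eq_mul_iff_exists.1 h with ⟨k, -, hk⟩ | ⟨p₁, hp₁, h'⟩
  · exact hq k u t (by rw [hk, mul_assoc]) hu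
  rcases mul_eq_mul_iff_exists.1 h' with ⟨k, hk, -⟩ | ⟨q₀, rfl, hq₀⟩
  · exact hp s u k (by rw [hp₁, hk, mul_assoc]) hu
  rcases hpq s p₁ q₀ t hp₁ hq₀ hu with rfl | rfl
  · exact hq 1 _ t (by rw [hq₀]; simp) hu
  · exact hp s _ 1 (by rw [hp₁]; simp) hu

theorem exists_rightInverse_isReduced (hsurj : Function.Surjective π) :
    ∃ nf : M → FreeMonoid A, Function.RightInverse nf π ∧ ∀ m, IsReduced π nf (nf m) := by
  let lt : FreeMonoid A → FreeMonoid A → Prop := List.Shortlex WellOrderingRel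
  have lt_wf : WellFounded lt := List.Shortlex.wf WellOrderingRel.isWellOrder.wf
  choose nf map_nf nf_min using fun m => lt_wf.has_min {l | π l = m} (hsurj m)
  refine ⟨nf, map_nf, fun m s q t hm _ => ?_⟩
  by_contra hne
  have hlt : lt (nf (π q)) q := by
    by_contra hnot
    exact hne (Std.Trichotomous.trichotomous (r := List.Shortlex WellOrderingRel) _ _
      (nf_min (π q) q rfl) hnot)
  refine nf_min m (s * nf (π q) * t) ?_ ?_
  · rw [← map_nf m, hm]
    simpa using congrArg (π s * · * π t) (map_nf (π q))
  · rw [hm]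
    exact shortlex_append_right (hlt.append_left s) t

/-- One step of the rewriting system that replaces a factor with unit value by its chosen
representative. -/
def UnitStep (π : FreeMonoid A →* M) (nf : M → FreeMonoid A) (p q : FreeMonoid A) : Prop :=
  ∃ s u t, IsUnit (π u) ∧ p = s * u * t ∧ q = s * nf (π u) * t

theorem UnitStep.mul_left {p q : FreeMonoid A} (h : UnitStep π nf p q) (s : FreeMonoid A) :
    UnitStep π nf (s * p) (s * q) := by
  obtain ⟨s', u, t, hu, rfl, rfl⟩ := h
  exact ⟨s * s', u, t, hu, by simp only [mul_assoc], by simp only [mul_assoc]⟩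

theorem reflGen_unitStep_mul_left {p q : FreeMonoid A} (h : ReflGen (UnitStep π nf) p q)
    (s : FreeMonoid A) : ReflGen (UnitStep π nf) (s * p) (s * q) := by
  cases h with
  | refl => exact .refl
  | single h => exact .single (h.mul_left s)

theorem UnitStep.mul_right {p q : FreeMonoid A} (h : UnitStep π nf p q) (t : FreeMonoid A) :
    UnitStep π nf (p * t) (q * t) := by
  obtain ⟨s, u, t', hu, rfl, rfl⟩ := h
  exact ⟨s, u, t' * t, hu, by simp only [mul_assoc], by simp only [mul_assoc]⟩

theorem unitStep_nf {m : M} (hm : IsUnit m) {u : FreeMonoid A} (hu : π u = m) :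
    UnitStep π nf u (nf m) :=
  ⟨1, u, 1, hu ▸ hm, by simp, by simp [hu]⟩

theorem join_unitStep_of_mul_eq (hnf : Function.RightInverse nf π) {u₁ u₂ k t₁ t₂ : FreeMonoid A}
    (hu₁ : IsUnit (π u₁)) (hu₂ : IsUnit (π u₂)) (h : u₁ * t₁ = k * (u₂ * t₂)) :
    Join (ReflGen (UnitStep π nf)) (nf (π u₁) * t₁) (k * nf (π u₂) * t₂) := by
  rcases mul_eq_mul_iff_exists.1 h with ⟨k, rfl, rfl⟩ | ⟨c, rfl, h'⟩
  · refine ⟨nf (π u₁) * k * nf (π u₂) * t₂, .single ?_, .single ?_⟩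
    · exact ⟨nf (π u₁) * k, u₂, t₂, hu₂, by simp only [mul_assoc], rfl⟩
    · simpa only [mul_assoc] using (unitStep_nf hu₁ rfl).mul_right (k * (nf (π u₂) * t₂))
  rcases mul_eq_mul_iff_exists.1 h' with ⟨r, rfl, rfl⟩ | ⟨r, rfl, rfl⟩
  · refine ⟨nf (π (k * (u₂ * r))) * t₁, .refl, .single ?_⟩
    have hstep : UnitStep π nf (k * (nf (π u₂) * r)) (nf (π (k * (u₂ * r)))) :=
      unitStep_nf hu₁ (by simp [hnf _])
    simpa only [mul_assoc] using hstep.mul_right t₁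
  · rw [map_mul] at hu₁ hu₂
    have hc : IsUnit (π c) := isUnit_of_isUnit_mul_of_isUnit_mul hu₁ hu₂
    have hk : IsUnit (π k) := hc.mul_right_iff.1 hu₁
    have hkcr : IsUnit (π (k * c * r)) := by
      simpa only [map_mul, mul_assoc] using hk.mul hu₂
    refine ⟨nf (π (k * c * r)) * t₂, .single ?_, .single ?_⟩
    · have hstep : UnitStep π nf (nf (π (k * c)) * r) (nf (π (k * c * r))) :=
        unitStep_nf hkcr (by simp [hnf _])
      simpa only [mul_assoc] using hstep.mul_right t₂
    · exact (unitStep_nf hkcr (by simp [hnf _, mul_assoc])).mul_right t₂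

theorem UnitStep.diamond (hnf : Function.RightInverse nf π) {p q r : FreeMonoid A}
    (hq : UnitStep π nf p q) (hr : UnitStep π nf p r) : Join (ReflGen (UnitStep π nf)) q r := by
  have join_of_mul_eq {s u₁ t₁ k u₂ t₂} (hu₁ : IsUnit (π u₁)) (hu₂ : IsUnit (π u₂))
      (h : u₁ * t₁ = k * (u₂ * t₂)) :
      Join (ReflGen (UnitStep π nf)) (s * nf (π u₁) * t₁) (s * k * nf (π u₂) * t₂) := by
    obtain ⟨d, hd₁, hd₂⟩ := join_unitStep_of_mul_eq hnf hu₁ hu₂ h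
    simp only [mul_assoc] at hd₁ hd₂ ⊢
    exact ⟨s * d, reflGen_unitStep_mul_left hd₁ s, reflGen_unitStep_mul_left hd₂ s⟩
  obtain ⟨s₁, u₁, t₁, hu₁, rfl, rfl⟩ := hq
  obtain ⟨s₂, u₂, t₂, hu₂, h, rfl⟩ := hr
  rw [mul_assoc, mul_assoc] at h
  rcases mul_eq_mul_iff_exists.1 h with ⟨k, rfl, h'⟩ | ⟨k, rfl, h'⟩
  · exact join_of_mul_eq hu₁ hu₂ h'
  · exact Join.symm.symm _ _ (join_of_mul_eq hu₂ hu₁ h')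

/-- Joinability under `UnitStep`, a congruence because the rewriting system is confluent. -/
def joinCon (hnf : Function.RightInverse nf π) : Con (FreeMonoid A) where
  r := Join (ReflTransGen (UnitStep π nf))
  iseqv := equivalence_join_reflTransGen fun _ _ _ hq hr =>
    let ⟨d, hd, hd'⟩ := hq.diamond hnf hr
    ⟨d, hd, hd'.to_reflTransGen⟩
  mul' := by
    rintro w x y z ⟨d, hw, hx⟩ ⟨e, hy, hz⟩
    have mul {p d q e} (hp : ReflTransGen (UnitStep π nf) p d)
        (hq : ReflTransGen (UnitStep π nf) q e) : ReflTransGen (UnitStep π nf) (p * q) (d * e) :=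
      (hp.lift (· * q) fun _ _ h => h.mul_right q).trans
        (hq.lift (d * ·) fun _ _ h => h.mul_left d)
    exact ⟨d * e, mul hw hy, mul hx hz⟩

theorem IsReduced.eq_of_reflTransGen {p q : FreeMonoid A} (hp : IsReduced π nf p)
    (h : ReflTransGen (UnitStep π nf) p q) : p = q := by
  induction h with
  | refl => rfl
  | tail _ hstep ih =>
    subst ih
    obtain ⟨s, u, t, hu, rfl, rfl⟩ := hstep
    rw [← hp s u t rfl hu]

theorem IsReduced.eq_of_map_eq (hπ : IsSpecialPresentation π W)
    (hnf : Function.RightInverse nf π) {p q : FreeMonoid A} (hp : IsReduced π nf p)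
    (hq : IsReduced π nf q) (h : π p = π q) : p = q := by
  have nf_one : nf 1 = 1 := by simpa using (hp 1 1 p (by simp) (by simp)).symm
  have hrel : ∀ w ∈ W, joinCon hnf w 1 := fun w hw =>
    ⟨1, .single (nf_one ▸ unitStep_nf isUnit_one (hπ.map_eq_one hw)), .refl⟩
  obtain ⟨d, hpd, hqd⟩ := hπ.con_of_map_eq (joinCon hnf) hrel h
  rw [hp.eq_of_reflTransGen hpd, hq.eq_of_reflTransGen hqd]

end Reduced

section Basis

variable {π : FreeMonoid A →* M} {W : Set (FreeMonoid A)} {nf : M → FreeMonoid A}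

/-- The word `x a y` has a unit as its value, and no shorter factor of it that contains this
occurrence of the letter `a` does. -/
structure IsMinimalContext (π : FreeMonoid A →* M) (x : FreeMonoid A) (a : A)
    (y : FreeMonoid A) : Prop where
  isUnit : IsUnit (π (x * of a * y))
  eq_one : ∀ x₁ x₂ y₁ y₂, x = x₁ * x₂ → y = y₁ * y₂ → IsUnit (π (x₂ * of a * y₁)) →
    x₁ = 1 ∧ y₂ = 1

theorem exists_isMinimalContext {x y : FreeMonoid A} {a : A} (h : IsUnit (π (x * of a * y))) :
    ∃ x₁ x₂ y₁ y₂, x = x₁ * x₂ ∧ y = y₁ * y₂ ∧ IsMinimalContext π x₂ a y₁ := by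
  obtain ⟨⟨x₂, y₁⟩, ⟨x₁, y₂, rfl, rfl, hu⟩, hmin⟩ :=
    (measure fun p : FreeMonoid A × FreeMonoid A => p.1.length + p.2.length).wf.has_min
      {p | ∃ x₁ y₂, x = x₁ * p.1 ∧ y = p.2 * y₂ ∧ IsUnit (π (p.1 * of a * p.2))}
      ⟨(x, y), 1, 1, by simp, by simp, h⟩
  refine ⟨x₁, x₂, y₁, y₂, rfl, rfl, hu, ?_⟩
  rintro x' x'' y' y'' rfl rfl hu'
  have hle : ¬x''.length + y'.length < (x' * x'').length + (y' * y'').length :=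
    hmin (x'', y') ⟨x₁ * x', y'' * y₂, by simp only [mul_assoc], by simp only [mul_assoc], hu'⟩
  simp only [length_mul] at hle
  simp only [← length_eq_zero]
  omega

namespace IsMinimalContext

variable {x y x' y' p : FreeMonoid A} {a : A}

theorem prefix_eq_one (h : IsMinimalContext π x a y) {x₁ x₂ : FreeMonoid A} (hx : x = x₁ * x₂)
    (hu : IsUnit (π x₁)) : x₁ = 1 := by
  refine (h.eq_one x₁ x₂ y 1 hx (by simp) ?_).1
  have := h.isUnit
  rwa [hx, mul_assoc, mul_assoc, map_mul, hu.mul_left_iff, ← mul_assoc] at this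

theorem suffix_eq_one (h : IsMinimalContext π x a y) {y₁ y₂ : FreeMonoid A} (hy : y = y₁ * y₂)
    (hu : IsUnit (π y₂)) : y₂ = 1 := by
  refine (h.eq_one 1 x y₁ y₂ (by simp) hy ?_).2
  have := h.isUnit
  rwa [hy, ← mul_assoc, map_mul, hu.mul_right_iff] at this

theorem isReduced_mul_left (h : IsMinimalContext π x a y) (hx : IsReduced π nf x)
    (hp : IsReduced π nf p) : IsReduced π nf (p * x) := by
  refine hp.mul hx fun p₀ p₁ x₁ x₂ _ hx' hu => .inr (h.prefix_eq_one hx' ?_)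
  have hxy := h.isUnit
  rw [hx', mul_assoc, mul_assoc, map_mul] at hxy
  rw [map_mul] at hu
  exact isUnit_of_isUnit_mul_of_isUnit_mul hu hxy

theorem isReduced_mul_right (h : IsMinimalContext π x a y) (hy : IsReduced π nf y)
    (hp : IsReduced π nf p) : IsReduced π nf (y * p) := by
  refine hy.mul hp fun y₁ y₂ p₀ p₁ hy' _ hu => .inl (h.suffix_eq_one hy' ?_)
  have hxy := h.isUnit
  rw [hy', ← mul_assoc, map_mul] at hxy
  rw [map_mul] at hu
  exact isUnit_of_isUnit_mul_of_isUnit_mul hxy hu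

theorem eq_of_mul_eq (h : IsMinimalContext π x a y) (h' : IsMinimalContext π x' a y')
    {s s' t t' : FreeMonoid A} (hx : s * x = s' * x') (hy : y * t = y' * t') :
    x = x' ∧ y = y' := by
  have eq_of_suffix {x y k y' t t'} (h : IsMinimalContext π x a y)
      (h' : IsMinimalContext π (k * x) a y') (hy : y * t = y' * t') : k = 1 ∧ y = y' := by
    rcases mul_eq_mul_iff_exists.1 hy with ⟨r, rfl, -⟩ | ⟨r, rfl, -⟩
    · obtain ⟨rfl, rfl⟩ := h'.eq_one k x y r rfl rfl h.isUnit
      simp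
    · have hu : IsUnit (π (x * of a * y')) := by
        have hxr := h.isUnit
        have hkx := h'.isUnit
        rw [← mul_assoc, map_mul] at hxr
        rw [mul_assoc, mul_assoc, ← mul_assoc x, map_mul] at hkx
        exact isUnit_of_isUnit_mul_of_isUnit_mul hkx hxr
      obtain ⟨-, rfl⟩ := h.eq_one 1 x y' r (by simp) rfl hu
      obtain ⟨rfl, -⟩ := h'.eq_one k x y' 1 rfl (by simp) hu
      simp
  rcases mul_eq_mul_iff_exists.1 hx with ⟨k, -, rfl⟩ | ⟨k, -, rfl⟩
  · obtain ⟨rfl, rfl⟩ := eq_of_suffix h' h hy.symm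
    simp
  · obtain ⟨rfl, rfl⟩ := eq_of_suffix h h' hy
    simp

end IsMinimalContext

/-- The basis of the collapsed edges: the edges `(π x, a, π y)` given by reduced words `x` and `y`
that form a minimal context of `a`. -/
def edgeBasis (π : FreeMonoid A →* M) (nf : M → FreeMonoid A) : Set (M × A × M) :=
  {e | ∃ x a y, IsReduced π nf x ∧ IsReduced π nf y ∧ IsMinimalContext π x a y ∧
    e = (π x, a, π y)}

theorem edgeBasis_subset_collapsedEdges : edgeBasis π nf ⊆ collapsedEdges π := by
  rintro _ ⟨x, a, y, -, -, h, rfl⟩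
  exact mem_collapsedEdges_of_isUnit h.isUnit

theorem exists_translate_edgeBasis (hπ : IsSpecialPresentation π W)
    (hnf : Function.RightInverse nf π) (hred : ∀ m, IsReduced π nf (nf m)) {e : M × A × M}
    (he : e ∈ relatorEdges π W) : ∃ m, ∃ b ∈ edgeBasis π nf, e = translate m b := by
  obtain ⟨m, x, a, y, hw, rfl⟩ := he
  have hu : IsUnit (π (nf (π x) * of a * nf (π y))) := by
    have : π (nf (π x) * of a * nf (π y)) = 1 := by simpa [hnf _] using hπ.map_eq_one hw
    exact this ▸ isUnit_one
  obtain ⟨x₁, x₂, y₁, y₂, hx, hy, hmin⟩ := exists_isMinimalContext hu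
  have hx₂ : IsReduced π nf x₂ := .of_mul_right (hx ▸ hred (π x))
  have hy₁ : IsReduced π nf y₁ := .of_mul_left (hy ▸ hred (π y))
  refine ⟨(m.1 * π x₁, π y₂ * m.2), _, ⟨x₂, a, y₁, hx₂, hy₁, hmin, rfl⟩, ?_⟩
  rw [← hnf (π x), ← hnf (π y), hx, hy]
  simp [translate, mul_assoc]

theorem translate_edgeBasis_injective (hπ : IsSpecialPresentation π W)
    (hnf : Function.RightInverse nf π) (hred : ∀ m, IsReduced π nf (nf m)) {m n : M × M}
    {b c : M × A × M} (hb : b ∈ edgeBasis π nf) (hc : c ∈ edgeBasis π nf)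
    (h : translate m b = translate n c) : m = n ∧ b = c := by
  obtain ⟨x, a, y, hx, hy, hmin, rfl⟩ := hb
  obtain ⟨x', a', y', hx', hy', hmin', rfl⟩ := hc
  simp only [translate, Prod.mk.injEq] at h
  obtain ⟨hleft, rfl, hright⟩ := h
  have hl : nf m.1 * x = nf n.1 * x' :=
    (hmin.isReduced_mul_left hx (hred _)).eq_of_map_eq hπ hnf
      (hmin'.isReduced_mul_left hx' (hred _)) (by simpa [hnf _] using hleft)
  have hr : y * nf m.2 = y' * nf n.2 :=
    (hmin.isReduced_mul_right hy (hred _)).eq_of_map_eq hπ hnf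
      (hmin'.isReduced_mul_right hy' (hred _)) (by simpa [hnf _] using hright)
  obtain ⟨rfl, rfl⟩ := hmin.eq_of_mul_eq hmin' hl hr
  exact ⟨Prod.ext (hnf.injective (mul_right_cancel hl)) (hnf.injective (mul_left_cancel hr)), rfl⟩

theorem existsUnique_translate_edgeBasis (hπ : IsSpecialPresentation π W)
    (hnf : Function.RightInverse nf π) (hred : ∀ m, IsReduced π nf (nf m)) {e : M × A × M}
    (he : e ∈ relatorEdges π W) :
    ∃! x : (M × M) × (M × A × M), x.2 ∈ edgeBasis π nf ∧ e = translate x.1 x.2 := by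
  obtain ⟨m, b, hb, rfl⟩ := exists_translate_edgeBasis hπ hnf hred he
  refine ⟨(m, b), ⟨hb, rfl⟩, fun ⟨n, c⟩ ⟨hc, h⟩ => ?_⟩
  obtain ⟨rfl, rfl⟩ := translate_edgeBasis_injective hπ hnf hred hb hc h
  rfl

theorem finite_edgeBasis (hπ : IsSpecialPresentation π W)
    (hnf : Function.RightInverse nf π) (hred : ∀ m, IsReduced π nf (nf m)) (hW : W.Finite) :
    (edgeBasis π nf).Finite := by
  -- A basis element is a translate of a relator edge, which is a translate of one of the finitely
  -- many basis elements `b o ho`; freeness makes the two basis elements equal.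
  have hocc : ∀ o : FreeMonoid A × A × FreeMonoid A, o.1 * of o.2.1 * o.2.2 ∈ W →
      ∃ m, ∃ b ∈ edgeBasis π nf, (π o.1, o.2.1, π o.2.2) = translate m b := fun o ho =>
    exists_translate_edgeBasis hπ hnf hred ⟨1, _, _, _, ho, by simp⟩
  choose m b hb hmb using hocc
  refine ((finite_setOf_mul_of_mul_mem hW).dependent_image b).subset fun c hc => ?_
  have hrel : c ∈ relatorEdges π W :=
    collapsedEdges_eq_relatorEdges hπ ▸ edgeBasis_subset_collapsedEdges hc
  obtain ⟨n, x, a, y, hw, hn⟩ := hrel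
  refine ⟨(x, a, y), hw, ?_⟩
  rw [hmb (x, a, y) hw, translate_translate, ← translate_one c] at hn
  exact (translate_edgeBasis_injective hπ hnf hred hc (hb _ hw) hn).2.symm

end Basis

theorem exists_basis_collapsedEdges {π : FreeMonoid A →* M} {W : Set (FreeMonoid A)}
    (hπ : IsSpecialPresentation π W) :
    ∃ C : Set (M × A × M), (W.Finite → C.Finite) ∧ C ⊆ collapsedEdges π ∧
      ∀ e ∈ collapsedEdges π,
        ∃! x : (M × M) × (M × A × M), x.2 ∈ C ∧ e = translate x.1 x.2 := by
  obtain ⟨nf, hnf, hred⟩ := exists_rightInverse_isReduced hπ.surjective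
  refine ⟨edgeBasis π nf, finite_edgeBasis hπ hnf hred, edgeBasis_subset_collapsedEdges, ?_⟩
  rw [collapsedEdges_eq_relatorEdges hπ]
  exact fun e he => existsUnique_translate_edgeBasis hπ hnf hred he

end SpecialMonoid

open SpecialMonoid in
theorem special_monoid_collapsed_edges_free_general {A ι : Type*}
    (w : ι → FreeMonoid A)
    (rel : FreeMonoid A → FreeMonoid A → Prop)
    (hrel : ∀ x y, rel x y ↔ ∃ i, x = w i ∧ y = 1)
    (N : Submonoid (PresentedMonoid rel × (PresentedMonoid rel)ᵐᵒᵖ))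
    (hN : ∀ p : PresentedMonoid rel × (PresentedMonoid rel)ᵐᵒᵖ,
      p ∈ N ↔ p.1 * p.2.unop = 1)
    (orb : (PresentedMonoid rel × PresentedMonoid rel) →
      (PresentedMonoid rel × PresentedMonoid rel) → Prop)
    (horb : orb = Relation.EqvGen fun x y => ∃ n ∈ N, y = (x.1 * n.1, n.2.unop * x.2))
    (E : Set (PresentedMonoid rel × A × PresentedMonoid rel))
    (hE : ∀ e : PresentedMonoid rel × A × PresentedMonoid rel, e ∈ E ↔
      orb (e.1, PresentedMonoid.of rel e.2.1 * e.2.2)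
        (e.1 * PresentedMonoid.of rel e.2.1, e.2.2)) :
    (∀ m₁ m₂ : PresentedMonoid rel, ∀ e ∈ E, (m₁ * e.1, e.2.1, e.2.2 * m₂) ∈ E) ∧
    ∃ C : Set (PresentedMonoid rel × A × PresentedMonoid rel), (Finite ι → C.Finite) ∧ C ⊆ E ∧
      ∀ e ∈ E, ∃! x : (PresentedMonoid rel × PresentedMonoid rel) ×
          (PresentedMonoid rel × A × PresentedMonoid rel),
        x.2 ∈ C ∧ e = (x.1.1 * x.2.1, x.2.2.1, x.2.2.2 * x.1.2) := by
  have hπ : IsSpecialPresentation (PresentedMonoid.mk rel) (Set.range w) :=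
    isSpecialPresentation_mk fun x y => by rw [hrel, exists_and_right]; simp [eq_comm]
  obtain rfl : E = collapsedEdges (PresentedMonoid.mk rel) := by
    ext e
    rw [hE, horb, eqvGen_eq_weakOrbit hN]
    rfl
  obtain ⟨C, hfin, hC, hfree⟩ := exists_basis_collapsedEdges hπ
  exact ⟨fun m₁ m₂ _ he => translate_mem_collapsedEdges (m₁, m₂) he, C,
    fun _ => hfin (Set.finite_range w), hC, hfree⟩

/-- Let `M = ⟨A ∣ w₁ = 1, …, w_k = 1⟩` be a finitely presented special monoid, `N` the
submonoid of `M × Mᵐᵒᵖ` of pairs `(u, v)` with `u * v = 1`, and `orb` the weak `N`-orbit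
equivalence on `M × M` generated by `(m₁, m₂) ≈ (m₁ n₁, n₂ m₂)` for `(n₁, n₂) ∈ N`.
Let `E` be the set of edges `(u, a, v)` of the two-sided Cayley graph of `M` whose
endpoints `(u, π(a) v)` and `(u π(a), v)` lie in the same weak `N`-orbit.  Then `E` is
closed under the `M × Mᵐᵒᵖ`-action `(m₁, m₂)·(u, a, v) = (m₁ u, a, v m₂)` and is a
finitely generated free left `M × Mᵐᵒᵖ`-set: there is a finite `C ⊆ E` such that every
element of `E` is uniquely of the form `(m₁ c₁, a, c₂ m₂)` with `(c₁, a, c₂) ∈ C`. -/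
theorem special_monoid_collapsed_edges_free {A : Type*} [Fintype A] {k : ℕ}
    (w : Fin k → FreeMonoid A)
    (rel : FreeMonoid A → FreeMonoid A → Prop)
    (hrel : ∀ x y, rel x y ↔ ∃ i : Fin k, x = w i ∧ y = 1)
    (N : Submonoid (PresentedMonoid rel × (PresentedMonoid rel)ᵐᵒᵖ))
    (hN : ∀ p : PresentedMonoid rel × (PresentedMonoid rel)ᵐᵒᵖ,
      p ∈ N ↔ p.1 * p.2.unop = 1)
    (orb : (PresentedMonoid rel × PresentedMonoid rel) →
      (PresentedMonoid rel × PresentedMonoid rel) → Prop)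
    (horb : orb = Relation.EqvGen fun x y => ∃ n ∈ N, y = (x.1 * n.1, n.2.unop * x.2))
    (E : Set (PresentedMonoid rel × A × PresentedMonoid rel))
    (hE : ∀ e : PresentedMonoid rel × A × PresentedMonoid rel, e ∈ E ↔
      orb (e.1, PresentedMonoid.of rel e.2.1 * e.2.2)
        (e.1 * PresentedMonoid.of rel e.2.1, e.2.2)) :
    (∀ m₁ m₂ : PresentedMonoid rel, ∀ e ∈ E, (m₁ * e.1, e.2.1, e.2.2 * m₂) ∈ E) ∧
    ∃ C : Set (PresentedMonoid rel × A × PresentedMonoid rel), C.Finite ∧ C ⊆ E ∧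
      ∀ e ∈ E, ∃! x : (PresentedMonoid rel × PresentedMonoid rel) ×
          (PresentedMonoid rel × A × PresentedMonoid rel),
        x.2 ∈ C ∧ e = (x.1.1 * x.2.1, x.2.2.1, x.2.2.2 * x.1.2) := by
  obtain ⟨hmem, C, hfin, hC⟩ :=
    special_monoid_collapsed_edges_free_general w rel hrel N hN orb horb E hE
  exact ⟨hmem, C, hfin inferInstance, hC⟩
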